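/- arXiv:2006.03975 — 3 statements merged into one kernel-verified Lean document; each statement's English description precedes it below -/
import Mathlib

section
/- Let d ≥ 1, N ≥ 2, A, B, C > 0, let ρ : ℝ^d → ℝ be a Schwartz function with ∫_{ℝ^d} ρ = 1, and let V, W : ℝ^d → ℝ be twice continuously differentiable with all first and second derivatives of at most polynomial growth. Define ρ^N(x₁,…,x_N) = Π_{j=1}^{N} ρ(x_j). Then for every x₁ ∈ ℝ^d, ∫_{(ℝ^d)^{N−1}} [ C Δρ^N + Σ_{j=1}^{N} div_{x_j}( A ∇V(x_j) ρ^N ) + Σ_{j=1}^{N} div_{x_j}( (B/(N−1)) Σ_{k≠j} ∇W(x_j − x_k) ρ^N ) ] d(x₂,…,x_N) = C Δρ(x₁) + A div( ∇V ρ )(x₁) + B div( ρ (∇W ∗ ρ) )(x₁), where (∇W ∗ ρ)(x) = ∫_{ℝ^d} ∇W(x − y) ρ(y) dy and Δ on the left is the Laplacian on (ℝ^d)^N. -/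
open MeasureTheory
open scoped RealInnerProductSpace

/-- The divergence of a vector field `F : ℝ^d → ℝ^d` at a point `x`:
`div F x = Σ_i ⟪∂F/∂x_i (x), e_i⟫`. -/
noncomputable def vdiv {d : ℕ} (F : EuclideanSpace ℝ (Fin d) → EuclideanSpace ℝ (Fin d))
    (x : EuclideanSpace ℝ (Fin d)) : ℝ :=
  ∑ i, ⟪fderiv ℝ F x (EuclideanSpace.single i 1), EuclideanSpace.single i 1⟫

/-- The Laplacian of `f : ℝ^d → ℝ` at `x`: `Δf x = Σ_i ∂²f/∂x_i² (x)`. -/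
noncomputable def lap {d : ℕ} (f : EuclideanSpace ℝ (Fin d) → ℝ)
    (x : EuclideanSpace ℝ (Fin d)) : ℝ :=
  ∑ i, fderiv ℝ (fun y => fderiv ℝ f y (EuclideanSpace.single i 1)) x
    (EuclideanSpace.single i 1)

/-!
For a particle `j` other than the first, each divergence in `x_j` is that of a flux which is
rapidly decaying in all of `x₂, …, x_N`, so it integrates to zero. The terms in `x₁` are
combinations of products over the particles: unit mass removes every particle that does not
interact with `x₁`, and each of the `N - 1` pair interactions contributes
`(B / (N - 1)) ∫ ρ(z) div(ρ ∇W(· - z))(x₁) dz`, which is `(B / (N - 1)) div(ρ (∇W ∗ ρ))(x₁)` by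
differentiation under the integral sign.
-/

section Growth

open Asymptotics

variable {E F G : Type*} [NormedAddCommGroup E] [NormedAddCommGroup F] [NormedAddCommGroup G]

/-- Polynomial growth. The filter `⊤` makes the bound hold on the whole space, not only near
infinity. -/
def PolyBounded (f : E → F) : Prop :=
  ∃ m : ℕ, f =O[⊤] fun x => (1 + ‖x‖) ^ m

theorem isBigO_top_one_add_norm_pow {m n : ℕ} (h : m ≤ n) :
    (fun x : E => (1 + ‖x‖) ^ m) =O[⊤] fun x => (1 + ‖x‖) ^ n :=
  .of_norm_le fun x => by
    rw [Real.norm_of_nonneg (by positivity)]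
    exact pow_le_pow_right₀ (by simp) h

namespace PolyBounded

theorem of_norm_le {f : E → F} {K : ℝ} {m : ℕ} (h : ∀ x, ‖f x‖ ≤ K * (1 + ‖x‖) ^ m) :
    PolyBounded f :=
  ⟨m, isBigO_top.2 ⟨K, fun x => (h x).trans_eq (by rw [Real.norm_of_nonneg (by positivity)])⟩⟩

theorem exists_norm_le {f : E → F} (hf : PolyBounded f) :
    ∃ (K : ℝ) (m : ℕ), 0 ≤ K ∧ ∀ x, ‖f x‖ ≤ K * (1 + ‖x‖) ^ m := by
  obtain ⟨m, hm⟩ := hf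
  obtain ⟨K, hK_nonneg, hK⟩ := hm.exists_nonneg
  exact ⟨K, m, hK_nonneg, fun x => (isBigOWith_top.1 hK x).trans_eq (by
    rw [Real.norm_of_nonneg (by positivity)])⟩

theorem const (c : F) : PolyBounded fun _ : E => c :=
  .of_norm_le (K := ‖c‖) (m := 0) fun _ => by simp

theorem add {f g : E → F} (hf : PolyBounded f) (hg : PolyBounded g) :
    PolyBounded fun x => f x + g x := by
  obtain ⟨m, hm⟩ := hf
  obtain ⟨n, hn⟩ := hg
  exact ⟨max m n, (hm.trans (isBigO_top_one_add_norm_pow (le_max_left m n))).add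
    (hn.trans (isBigO_top_one_add_norm_pow (le_max_right m n)))⟩

theorem of_norm_le_mul {H : Type*} [NormedAddCommGroup H] {f : E → F} {g : E → G} {h : E → H}
    (hf : PolyBounded f) (hg : PolyBounded g) (hle : ∀ x, ‖h x‖ ≤ ‖f x‖ * ‖g x‖) :
    PolyBounded h := by
  obtain ⟨m, hm⟩ := hf
  obtain ⟨n, hn⟩ := hg
  refine ⟨m + n, (IsBigO.of_norm_le hle).trans ?_⟩
  simpa only [pow_add] using hm.norm_left.mul hn.norm_left

theorem comp {f : F → G} {g : E → F} (hf : PolyBounded f) (hg : PolyBounded g) :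
    PolyBounded fun x => f (g x) := by
  obtain ⟨m, hm⟩ := hf
  obtain ⟨n, hn⟩ := hg
  have h_one : (fun _ : E => (1 : ℝ)) =O[⊤] fun x => (1 + ‖x‖) ^ n := by
    simpa only [pow_zero] using isBigO_top_one_add_norm_pow (E := E) n.zero_le
  refine ⟨n * m, (hm.comp_tendsto Filter.tendsto_top).trans ?_⟩
  simpa only [pow_mul, Function.comp_def] using (h_one.add hn.norm_left).pow m

theorem const_sub (y : E) : PolyBounded fun x => y - x :=
  .of_norm_le (K := 1 + ‖y‖) (m := 1) fun x => (norm_sub_le y x).trans <| by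
    nlinarith [mul_nonneg (norm_nonneg y) (norm_nonneg x)]

variable [NormedSpace ℝ E] [NormedSpace ℝ F]

theorem clm (L : E →L[ℝ] F) : PolyBounded L :=
  .of_norm_le (K := ‖L‖) (m := 1) fun x => (L.le_opNorm x).trans (by gcongr; simp)

end PolyBounded

variable [NormedSpace ℝ E] [NormedSpace ℝ F] [NormedSpace ℝ G]

/-- `C¹` maps which grow at most polynomially together with their derivative: the regularity
required of the force fields. -/
structure PolyBoundedC1 (f : E → F) : Prop where
  contDiff : ContDiff ℝ 1 f
  polyBounded : PolyBounded f
  polyBounded_fderiv : PolyBounded (fderiv ℝ f)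

namespace PolyBoundedC1

theorem differentiable {f : E → F} (hf : PolyBoundedC1 f) : Differentiable ℝ f :=
  hf.contDiff.differentiable one_ne_zero

theorem continuous_fderiv {f : E → F} (hf : PolyBoundedC1 f) : Continuous (fderiv ℝ f) :=
  hf.contDiff.continuous_fderiv one_ne_zero

theorem const (c : F) : PolyBoundedC1 fun _ : E => c where
  contDiff := contDiff_const
  polyBounded := .const c
  polyBounded_fderiv := by simpa only [fderiv_fun_const] using .const 0

theorem clm (L : E →L[ℝ] F) : PolyBoundedC1 L where
  contDiff := L.contDiff
  polyBounded := .clm L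
  polyBounded_fderiv := by
    rw [funext fun x => L.fderiv (x := x)]
    exact .const L

theorem eval {ι : Type*} [Fintype ι] (j : ι) : PolyBoundedC1 fun x : ι → E => x j :=
  clm (.proj j : (ι → E) →L[ℝ] E)

theorem add {f g : E → F} (hf : PolyBoundedC1 f) (hg : PolyBoundedC1 g) :
    PolyBoundedC1 fun x => f x + g x where
  contDiff := hf.contDiff.add hg.contDiff
  polyBounded := hf.polyBounded.add hg.polyBounded
  polyBounded_fderiv := by
    have h_eq : fderiv ℝ (fun x => f x + g x) = fun x => fderiv ℝ f x + fderiv ℝ g x :=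
      funext fun x => fderiv_fun_add (hf.differentiable x) (hg.differentiable x)
    rw [h_eq]
    exact hf.polyBounded_fderiv.add hg.polyBounded_fderiv

theorem sum {ι : Type*} {s : Finset ι} {f : ι → E → F} (hf : ∀ i ∈ s, PolyBoundedC1 (f i)) :
    PolyBoundedC1 fun x => ∑ i ∈ s, f i x := by
  classical
  induction s using Finset.induction_on with
  | empty => simpa only [Finset.sum_empty] using const 0
  | insert a s ha ih =>
    simp only [Finset.sum_insert ha]
    exact (hf a (s.mem_insert_self a)).add (ih fun i hi => hf i (Finset.mem_insert_of_mem hi))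

theorem comp {f : F → G} {g : E → F} (hf : PolyBoundedC1 f) (hg : PolyBoundedC1 g) :
    PolyBoundedC1 fun x => f (g x) where
  contDiff := hf.contDiff.comp hg.contDiff
  polyBounded := hf.polyBounded.comp hg.polyBounded
  polyBounded_fderiv :=
    (hf.polyBounded_fderiv.comp hg.polyBounded).of_norm_le_mul hg.polyBounded_fderiv fun x => by
      rw [fderiv_fun_comp x (hf.differentiable _) (hg.differentiable _)]
      exact ContinuousLinearMap.opNorm_comp_le _ _

theorem const_smul {f : E → F} (hf : PolyBoundedC1 f) (c : ℝ) : PolyBoundedC1 fun x => c • f x :=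
  (clm (c • ContinuousLinearMap.id ℝ F)).comp hf

theorem sub {f g : E → F} (hf : PolyBoundedC1 f) (hg : PolyBoundedC1 g) :
    PolyBoundedC1 fun x => f x - g x := by
  simpa only [sub_eq_add_neg, neg_one_smul] using hf.add (hg.const_smul (-1))

theorem gradient {H : Type*} [NormedAddCommGroup H] [InnerProductSpace ℝ H] [CompleteSpace H]
    {V : H → ℝ} (hV : ContDiff ℝ 2 V) {K : ℝ} {m : ℕ}
    (hbound : ∀ k : ℕ, 1 ≤ k → k ≤ 2 → ∀ x, ‖iteratedFDeriv ℝ k V x‖ ≤ K * (1 + ‖x‖) ^ m) :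
    PolyBoundedC1 (gradient V) := by
  have h_fderiv : PolyBoundedC1 (fderiv ℝ V) :=
    { contDiff := hV.fderiv_right (by norm_num)
      polyBounded := .of_norm_le fun x => by
        simpa only [norm_iteratedFDeriv_one] using hbound 1 le_rfl one_le_two x
      polyBounded_fderiv := .of_norm_le fun x => by
        simpa only [← norm_iteratedFDeriv_one, norm_iteratedFDeriv_fderiv] using
          hbound 2 one_le_two le_rfl x }
  exact (clm (InnerProductSpace.toDual ℝ H).symm.toContinuousLinearEquiv.toContinuousLinearMap).comp
    h_fderiv

end PolyBoundedC1

end Growth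

section Moments

variable {E F G : Type*} [NormedAddCommGroup E] [MeasurableSpace E]
  [NormedAddCommGroup F] [NormedSpace ℝ F] [NormedAddCommGroup G] [NormedSpace ℝ G]

/-- All polynomial moments of `g` are finite. This is the integrated form of rapid decay, dual to
`PolyBounded`: it is stable under products over independent variables. -/
def HasFiniteMoments (g : E → F) (μ : Measure E := by volume_tac) : Prop :=
  ∀ m : ℕ, Integrable (fun x => (1 + ‖x‖) ^ m • g x) μ

namespace HasFiniteMoments

theorem integrable {g : E → F} {μ : Measure E} (hg : HasFiniteMoments g μ) : Integrable g μ := by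
  simpa only [pow_zero, one_smul] using hg 0

theorem clm_comp {g : E → F} {μ : Measure E} (hg : HasFiniteMoments g μ) (L : F →L[ℝ] G) :
    HasFiniteMoments (fun x => L (g x)) μ := fun m => by
  simpa only [map_smul] using L.integrable_comp (hg m)

theorem integrable_smul {g : E → ℝ} {f : E → F} {μ : Measure E} (hg : HasFiniteMoments g μ)
    (hf : PolyBounded f) (hf_meas : AEStronglyMeasurable f μ) :
    Integrable (fun x => g x • f x) μ := by
  obtain ⟨K, m, -, hK⟩ := hf.exists_norm_le
  refine ((hg m).norm.const_mul K).mono' (hg.integrable.aestronglyMeasurable.smul hf_meas)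
    (.of_forall fun x => ?_)
  calc ‖g x • f x‖ = ‖g x‖ * ‖f x‖ := norm_smul _ _
    _ ≤ ‖g x‖ * (K * (1 + ‖x‖) ^ m) := by gcongr; exact hK x
    _ = K * ‖(1 + ‖x‖) ^ m • g x‖ := by
        rw [norm_smul, Real.norm_of_nonneg (by positivity : 0 ≤ (1 + ‖x‖) ^ m)]
        ring

theorem of_schwartzMap {E : Type*} [NormedAddCommGroup E] [NormedSpace ℝ E] [MeasurableSpace E]
    [BorelSpace E] [SecondCountableTopology E] {μ : Measure E} [μ.HasTemperateGrowth]
    (f : SchwartzMap E F) : HasFiniteMoments f μ := fun m => by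
  have h_binomial (x : E) : (1 + ‖x‖) ^ m * ‖f x‖ =
      ∑ k ∈ Finset.range (m + 1), (m.choose k : ℝ) * (‖x‖ ^ k * ‖f x‖) := by
    rw [add_comm, add_pow, Finset.sum_mul]
    exact Finset.sum_congr rfl fun k _ => by rw [one_pow]; ring
  have h_bound : Integrable (fun x => (1 + ‖x‖) ^ m * ‖f x‖) μ := by
    simp only [h_binomial]
    exact integrable_finsetSum _ fun k _ => (f.integrable_pow_mul μ k).const_mul _
  refine h_bound.mono' ?_ (.of_forall fun x => ?_)
  · exact ((continuous_const.add continuous_norm).pow m |>.smul f.continuous).aestronglyMeasurable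
  · rw [norm_smul, Real.norm_of_nonneg (by positivity)]

end HasFiniteMoments

theorem integrable_iteratedFDeriv_schwartzMap {E : Type*} [NormedAddCommGroup E] [NormedSpace ℝ E]
    [MeasurableSpace E] [BorelSpace E] [SecondCountableTopology E] {μ : Measure E}
    [μ.HasTemperateGrowth] (f : SchwartzMap E F) (n : ℕ) : Integrable (iteratedFDeriv ℝ n f) μ := by
  have h_cont : Continuous (iteratedFDeriv ℝ n f) := (f.smooth n).continuous_iteratedFDeriv le_rfl
  refine (integrable_norm_iff h_cont.aestronglyMeasurable).1 ?_
  simpa only [pow_zero, one_mul] using f.integrable_pow_mul_iteratedFDeriv μ 0 n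

section Pi

variable {ι : Type*} [Fintype ι] {E : ι → Type*} [∀ i, NormedAddCommGroup (E i)]

theorem one_add_pi_norm_le_prod (x : ∀ i, E i) : 1 + ‖x‖ ≤ ∏ i, (1 + ‖x i‖) := by
  classical
  have h_one_le (s : Finset ι) : 1 ≤ ∏ i ∈ s, (1 + ‖x i‖) := s.one_le_prod fun i _ => by simp
  suffices ‖x‖ ≤ ∏ i, (1 + ‖x i‖) - 1 by linarith
  refine (pi_norm_le_iff_of_nonneg (sub_nonneg.2 (h_one_le _))).2 fun i => ?_
  rw [← Finset.mul_prod_erase _ _ (Finset.mem_univ i)]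
  nlinarith [h_one_le (Finset.univ.erase i), norm_nonneg (x i)]

theorem HasFiniteMoments.pi_prod [∀ i, MeasurableSpace (E i)] [∀ i, OpensMeasurableSpace (E i)]
    [∀ i, SecondCountableTopology (E i)] {μ : ∀ i, Measure (E i)} [∀ i, SigmaFinite (μ i)]
    {g : ∀ i, E i → ℝ} (hg : ∀ i, HasFiniteMoments (g i) (μ i)) :
    HasFiniteMoments (fun x : ∀ i, E i => ∏ i, g i (x i)) (Measure.pi μ) := fun m => by
  have h_prod := Integrable.fintype_prod_dep fun i => (hg i).integrable
  have h_weight : Continuous fun x : ∀ i, E i => (1 + ‖x‖) ^ m := by fun_prop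
  refine (Integrable.fintype_prod_dep fun i => hg i m).mono
    (h_weight.aestronglyMeasurable.smul h_prod.aestronglyMeasurable) (.of_forall fun x => ?_)
  simp only [smul_eq_mul, Finset.prod_mul_distrib, Finset.prod_pow, norm_mul, norm_pow]
  gcongr
  rw [Real.norm_of_nonneg (by positivity)]
  exact (one_add_pi_norm_le_prod x).trans (le_abs_self _)

end Pi

end Moments

section IntegratesTo

variable {α F G : Type*} [MeasurableSpace α] [NormedAddCommGroup F] [NormedSpace ℝ F]
  [NormedAddCommGroup G] [NormedSpace ℝ G]

/-- `f` is integrable with integral `a`. Unlike an equation `∫ x, f x ∂μ = a`, which the default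
value of the integral can satisfy, this is additive in `f`. -/
structure IntegratesTo (f : α → F) (a : F) (μ : Measure α := by volume_tac) : Prop where
  integrable : Integrable f μ
  integral_eq : ∫ x, f x ∂μ = a

namespace IntegratesTo

variable {f g : α → F} {a b : F} {μ : Measure α}

theorem congr (hf : IntegratesTo f a μ) (hfg : ∀ x, g x = f x) : IntegratesTo g a μ := by
  rwa [funext hfg]

theorem add (hf : IntegratesTo f a μ) (hg : IntegratesTo g b μ) :
    IntegratesTo (fun x => f x + g x) (a + b) μ :=
  ⟨hf.integrable.add hg.integrable, by
    rw [integral_add hf.integrable hg.integrable, hf.integral_eq, hg.integral_eq]⟩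

theorem sum {ι : Type*} {s : Finset ι} {f : ι → α → F} {a : ι → F}
    (hf : ∀ i ∈ s, IntegratesTo (f i) (a i) μ) :
    IntegratesTo (fun x => ∑ i ∈ s, f i x) (∑ i ∈ s, a i) μ :=
  ⟨integrable_finsetSum s fun i hi => (hf i hi).integrable, by
    rw [integral_finsetSum s fun i hi => (hf i hi).integrable]
    exact Finset.sum_congr rfl fun i hi => (hf i hi).integral_eq⟩

theorem const_mul {f : α → ℝ} {a : ℝ} (c : ℝ) (hf : IntegratesTo f a μ) :
    IntegratesTo (fun x => c * f x) (c * a) μ :=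
  ⟨hf.integrable.const_mul c, by rw [integral_const_mul, hf.integral_eq]⟩

theorem clm_comp [CompleteSpace F] [CompleteSpace G] (L : F →L[ℝ] G) (hf : IntegratesTo f a μ) :
    IntegratesTo (fun x => L (f x)) (L a) μ :=
  ⟨L.integrable_comp hf.integrable, by
    rw [L.integral_comp_comm hf.integrable, hf.integral_eq]⟩

theorem pi_prod {ι : Type*} [Fintype ι] {α : ι → Type*} [∀ i, MeasurableSpace (α i)]
    {μ : ∀ i, Measure (α i)} [∀ i, SigmaFinite (μ i)] {f : ∀ i, α i → ℝ} {a : ι → ℝ}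
    (hf : ∀ i, IntegratesTo (f i) (a i) (μ i)) :
    IntegratesTo (fun x : ∀ i, α i => ∏ i, f i (x i)) (∏ i, a i) (Measure.pi μ) :=
  ⟨.fintype_prod_dep fun i => (hf i).integrable, by
    rw [integral_fintype_prod_eq_prod]
    exact Finset.prod_congr rfl fun i _ => (hf i).integral_eq⟩

end IntegratesTo

end IntegratesTo

section UpdateProduct

variable {ι α M : Type*} [Fintype ι] [DecidableEq ι] [CommMonoid M]

theorem prod_apply_update (f : ι → α → M) (x : ι → α) (j : ι) (y : α) :
    ∏ i, f i (Function.update x j y i) = (∏ i ∈ Finset.univ.erase j, f i (x i)) * f j y := by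
  simp only [Function.apply_update f, Finset.prod_update_of_mem (Finset.mem_univ j),
    Finset.sdiff_singleton_eq_erase, mul_comm]

theorem prod_update_const_apply (f g : α → M) (x : ι → α) (k : ι) :
    ∏ i, Function.update (fun _ => f) k g i (x i) =
      (∏ i ∈ Finset.univ.erase k, f (x i)) * g (x k) :=
  prod_apply_update (fun i (u : α → M) => u (x i)) (fun _ => f) k g

theorem IntegratesTo.prod_erase_mul [MeasurableSpace α] {f g : α → ℝ} {a : ℝ} {μ : Measure α}
    [SigmaFinite μ] (hf : IntegratesTo f 1 μ) (hg : IntegratesTo g a μ) (k : ι) :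
    IntegratesTo (fun x : ι → α => (∏ i ∈ Finset.univ.erase k, f (x i)) * g (x k)) a
      (Measure.pi fun _ => μ) := by
  have h_prod := IntegratesTo.pi_prod (f := Function.update (fun _ => f) k g)
    (a := Function.update (fun _ => 1) k a) (μ := fun _ : ι => μ) fun i => by
      rcases eq_or_ne i k with rfl | hik
      · simpa only [Function.update_self] using hg
      · simpa only [Function.update_of_ne hik] using hf
  have h_mass : ∏ i, Function.update (fun _ : ι => (1 : ℝ)) k a i = a := by
    simp only [Finset.prod_update_of_mem (Finset.mem_univ k), Finset.prod_const_one, mul_one]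
  simpa only [h_mass, prod_update_const_apply] using h_prod

theorem HasFiniteMoments.prod_erase_mul {E : Type*} [NormedAddCommGroup E] [MeasurableSpace E]
    [OpensMeasurableSpace E] [SecondCountableTopology E] {μ : Measure E} [SigmaFinite μ]
    {f g : E → ℝ} (hf : HasFiniteMoments f μ) (hg : HasFiniteMoments g μ) (k : ι) :
    HasFiniteMoments (fun x : ι → E => (∏ i ∈ Finset.univ.erase k, f (x i)) * g (x k))
      (Measure.pi fun _ => μ) := by
  have h_prod := HasFiniteMoments.pi_prod (g := Function.update (fun _ => f) k g)
    (μ := fun _ : ι => μ) fun i => by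
      rcases eq_or_ne i k with rfl | hik
      · simpa only [Function.update_self] using hg
      · simpa only [Function.update_of_ne hik] using hf
  simpa only [prod_update_const_apply] using h_prod

end UpdateProduct

section Calculus

variable {E F : Type*} [NormedAddCommGroup E] [NormedSpace ℝ E] [NormedAddCommGroup F]
  [NormedSpace ℝ F]

theorem integratesTo_fderiv_apply_zero [FiniteDimensional ℝ E] [MeasurableSpace E] [BorelSpace E]
    {μ : Measure E} [μ.IsAddHaarMeasure] {f : E → F} {v : E} (hf : Differentiable ℝ f)
    (hf_int : Integrable f μ) (hf'_int : Integrable (fun x => fderiv ℝ f x v) μ) :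
    IntegratesTo (fun x => fderiv ℝ f x v) 0 μ := by
  refine ⟨hf'_int, ?_⟩
  have h_parts := integral_smul_fderiv_eq_neg_fderiv_smul_of_integrable (μ := μ)
    (f := fun _ : E => (1 : ℝ)) (g := f) (v := v) (by simp) (by simpa only [one_smul] using hf'_int)
    (by simpa only [one_smul] using hf_int) (fun _ _ => differentiableAt_const _) fun x _ => hf x
  simpa using h_parts

theorem fderiv_comp_update {ι : Type*} [Finite ι] [DecidableEq ι] {Φ : (ι → E) → F} {x : ι → E}
    (hΦ : DifferentiableAt ℝ Φ x) (j : ι) (v : E) :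
    fderiv ℝ (fun y => Φ (Function.update x j y)) (x j) v = fderiv ℝ Φ x (Pi.single j v) := by
  cases nonempty_fintype ι
  have hΦ' : HasFDerivAt Φ (fderiv ℝ Φ x) (Function.update x j (x j)) := by
    simpa only [Function.update_eq_self] using hΦ.hasFDerivAt
  have h_comp := hΦ'.comp (x j) (hasFDerivAt_update x (x j))
  rw [show (fun y => Φ (Function.update x j y)) = Φ ∘ Function.update x j from rfl, h_comp.fderiv,
    ContinuousLinearMap.comp_apply]
  congr 1
  ext i
  rcases eq_or_ne i j with rfl | hij
  · simp
  · simp [hij]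

variable {ι : Type*} [Fintype ι]

theorem differentiable_pi_prod {ρ : E → ℝ} (hρ : Differentiable ℝ ρ) :
    Differentiable ℝ fun x : ι → E => ∏ i, ρ (x i) := by
  fun_prop

variable [DecidableEq ι]

theorem fderiv_pi_prod_single {ρ : E → ℝ} (hρ : Differentiable ℝ ρ) (x : ι → E) (j : ι) (v : E) :
    fderiv ℝ (fun x : ι → E => ∏ i, ρ (x i)) x (Pi.single j v) =
      (∏ i ∈ Finset.univ.erase j, ρ (x i)) * fderiv ℝ ρ (x j) v := by
  rw [← fderiv_comp_update (differentiable_pi_prod hρ x)]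
  simp only [prod_apply_update fun _ => ρ]
  rw [fderiv_const_mul (hρ (x j))]
  rfl

theorem hasFDerivAt_integral_smul_comp_sub [MeasurableSpace E] [BorelSpace E]
    [SecondCountableTopology E] {μ : Measure E} {ρ : E → ℝ} (hρ : HasFiniteMoments ρ μ)
    {G : E → F} (hG : PolyBoundedC1 G) (x : E) :
    HasFDerivAt (fun y => ∫ z, ρ z • G (y - z) ∂μ) (∫ z, ρ z • fderiv ℝ G (x - z) ∂μ) x := by
  obtain ⟨K, m, hK_nonneg, hK⟩ := hG.polyBounded_fderiv.exists_norm_le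
  have h_sub (y : E) : Continuous fun z => y - z := by fun_prop
  have hρ_meas := hρ.integrable.aestronglyMeasurable
  refine hasFDerivAt_integral_of_dominated_of_fderiv_le
    (F' := fun y z => ρ z • fderiv ℝ G (y - z)) (s := Metric.ball x 1)
    (bound := fun z => (K * (2 + ‖x‖) ^ m) * ‖(1 + ‖z‖) ^ m • ρ z‖)
    (Metric.ball_mem_nhds x one_pos)
    (.of_forall fun y =>
      hρ_meas.smul (hG.contDiff.continuous.comp (h_sub y)).aestronglyMeasurable)
    (hρ.integrable_smul (hG.polyBounded.comp (.const_sub x))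
      (hG.contDiff.continuous.comp (h_sub x)).aestronglyMeasurable)
    (hρ_meas.smul (hG.continuous_fderiv.comp (h_sub x)).aestronglyMeasurable)
    (.of_forall fun z y hy => ?_) ((hρ m).norm.const_mul _) (.of_forall fun z y _ => ?_)
  · have hy_norm : ‖y‖ ≤ ‖x‖ + 1 := by
      have h_dist : ‖y - x‖ < 1 := mem_ball_iff_norm.1 hy
      linarith [norm_sub_norm_le y x]
    have h_sub_norm : 1 + ‖y - z‖ ≤ (2 + ‖x‖) * (1 + ‖z‖) := by
      nlinarith [norm_sub_le y z, norm_nonneg z, norm_nonneg x]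
    calc ‖ρ z • fderiv ℝ G (y - z)‖ ≤ ‖ρ z‖ * (K * (1 + ‖y - z‖) ^ m) := by
          rw [norm_smul]
          gcongr
          exact hK _
      _ ≤ ‖ρ z‖ * (K * ((2 + ‖x‖) * (1 + ‖z‖)) ^ m) := by gcongr
      _ = K * (2 + ‖x‖) ^ m * ‖(1 + ‖z‖) ^ m • ρ z‖ := by
          rw [norm_smul, Real.norm_of_nonneg (by positivity : 0 ≤ (1 + ‖z‖) ^ m), mul_pow]
          ring
  · exact ((hasFDerivAt_comp_sub z).2 (hG.differentiable _).hasFDerivAt).fun_const_smul (ρ z)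

end Calculus

section Divergence

variable {d : ℕ}

local notation "𝔼" => EuclideanSpace ℝ (Fin d)

theorem vdiv_const_smul (c : ℝ) (F : 𝔼 → 𝔼) (x : 𝔼) :
    vdiv (fun y => c • F y) x = c * vdiv F x := by
  have h_fderiv : fderiv ℝ (fun y => c • F y) = c • fderiv ℝ F := fderiv_const_smul_field c
  simp only [vdiv, h_fderiv, Pi.smul_apply, smul_apply, real_inner_smul_left, Finset.mul_sum]

theorem vdiv_sum {κ : Type*} {s : Finset κ} {F : κ → 𝔼 → 𝔼} {x : 𝔼}
    (hF : ∀ k ∈ s, DifferentiableAt ℝ (F k) x) :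
    vdiv (fun y => ∑ k ∈ s, F k y) x = ∑ k ∈ s, vdiv (F k) x := by
  simp only [vdiv, fderiv_fun_sum hF, sum_apply, sum_inner]
  exact Finset.sum_comm

theorem vdiv_comp_sub (F : 𝔼 → 𝔼) (z x : 𝔼) :
    vdiv (fun y => F (y - z)) x = vdiv F (x - z) := by
  simp only [vdiv, fderiv_comp_sub]

theorem vdiv_smul {f : 𝔼 → ℝ} {F : 𝔼 → 𝔼} {x : 𝔼} (hf : DifferentiableAt ℝ f x)
    (hF : DifferentiableAt ℝ F x) :
    vdiv (fun y => f y • F y) x = f x * vdiv F x + fderiv ℝ f x (F x) := by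
  have h_coord : fderiv ℝ f x (F x) = ∑ i, fderiv ℝ f x (EuclideanSpace.single i 1) *
      ⟪F x, EuclideanSpace.single i 1⟫ := by
    conv_lhs => rw [← (EuclideanSpace.basisFun (Fin d) ℝ).sum_repr (F x)]
    simp [EuclideanSpace.inner_single_right, mul_comm]
  rw [h_coord, vdiv, vdiv, Finset.mul_sum, ← Finset.sum_add_distrib]
  refine Finset.sum_congr rfl fun i _ => ?_
  rw [fderiv_fun_smul hf hF]
  simp only [add_apply, smul_apply, ContinuousLinearMap.smulRight_apply, inner_add_left,
    real_inner_smul_left]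

theorem lap_const_mul (c : ℝ) (f : 𝔼 → ℝ) (x : 𝔼) :
    lap (fun y => c * f y) x = c * lap f x := by
  have h_fderiv (g : 𝔼 → ℝ) : fderiv ℝ (fun y => c * g y) = c • fderiv ℝ g :=
    fderiv_const_smul_field c
  simp only [lap, h_fderiv, Pi.smul_apply, smul_apply, smul_eq_mul, Finset.mul_sum]

theorem integratesTo_lap_zero {ρ : 𝔼 → ℝ} (hρ : ContDiff ℝ 2 ρ) (hρ' : Integrable (fderiv ℝ ρ))
    (hρ'' : Integrable (iteratedFDeriv ℝ 2 ρ)) : IntegratesTo (lap ρ) 0 := by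
  have hρ'_diff : Differentiable ℝ (fderiv ℝ ρ) :=
    (hρ.fderiv_right (m := 1) (by norm_num)).differentiable one_ne_zero
  have h_partial (v : 𝔼) : IntegratesTo (fun x => fderiv ℝ (fun y => fderiv ℝ ρ y v) x v) 0 := by
    refine integratesTo_fderiv_apply_zero (by fun_prop) (hρ'.apply_continuousLinearMap v) ?_
    have h_second (x : 𝔼) : fderiv ℝ (fun y => fderiv ℝ ρ y v) x v =
        ContinuousMultilinearMap.apply ℝ (fun _ : Fin 2 => 𝔼) ℝ (fun _ => v)
          (iteratedFDeriv ℝ 2 ρ x) := by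
      rw [fderiv_clm_apply (hρ'_diff x) (differentiableAt_const v)]
      simp [iteratedFDeriv_two_apply]
    simp only [h_second]
    exact ContinuousLinearMap.integrable_comp _ hρ''
  have h_sum := IntegratesTo.sum (s := Finset.univ) fun i _ =>
    h_partial (EuclideanSpace.single i 1)
  rwa [Finset.sum_const_zero] at h_sum

theorem integratesTo_vdiv_conv {ρ : 𝔼 → ℝ} (hρ : HasFiniteMoments ρ) {G : 𝔼 → 𝔼}
    (hG : PolyBoundedC1 G) (x : 𝔼) :
    IntegratesTo (fun z => ρ z * vdiv G (x - z)) (vdiv (fun y => ∫ z, ρ z • G (y - z)) x) := by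
  have h_sub : Continuous fun z => x - z := by fun_prop
  have h_fderiv : IntegratesTo (fun z => ρ z • fderiv ℝ G (x - z))
      (fderiv ℝ (fun y => ∫ z, ρ z • G (y - z)) x) :=
    ⟨hρ.integrable_smul (hG.polyBounded_fderiv.comp (.const_sub x))
      (hG.continuous_fderiv.comp h_sub).aestronglyMeasurable,
      (hasFDerivAt_integral_smul_comp_sub hρ hG x).fderiv.symm⟩
  have h_entry (v : 𝔼) := (h_fderiv.clm_comp (.apply ℝ 𝔼 v)).clm_comp ((innerSL ℝ).flip v)
  have h_sum := IntegratesTo.sum (s := Finset.univ) fun i _ =>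
    h_entry (EuclideanSpace.single i 1)
  simpa only [vdiv, Finset.mul_sum, ContinuousLinearMap.apply_apply,
    ContinuousLinearMap.flip_apply, innerSL_apply_apply, smul_apply, real_inner_smul_left]
    using h_sum

theorem integratesTo_vdiv_smul_conv {ρ : 𝔼 → ℝ} (hρ : HasFiniteMoments ρ) {G : 𝔼 → 𝔼}
    (hG : PolyBoundedC1 G) {f : 𝔼 → ℝ} {x : 𝔼} (hf : DifferentiableAt ℝ f x) :
    IntegratesTo (fun z => ρ z * vdiv (fun y => f y • G (y - z)) x)
      (vdiv (fun y => f y • ∫ z, ρ z • G (y - z)) x) := by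
  have h_sub : Continuous fun z => x - z := by fun_prop
  have h_conv : IntegratesTo (fun z => ρ z • G (x - z)) (∫ z, ρ z • G (x - z)) :=
    ⟨hρ.integrable_smul (hG.polyBounded.comp (.const_sub x))
      (hG.contDiff.continuous.comp h_sub).aestronglyMeasurable, rfl⟩
  have h_add := ((integratesTo_vdiv_conv hρ hG x).const_mul (f x)).add
    (h_conv.clm_comp (fderiv ℝ f x))
  have hG_diff (z : 𝔼) : DifferentiableAt ℝ (fun y => G (y - z)) x :=
    (differentiableAt_comp_sub z).2 (hG.differentiable _)
  rw [vdiv_smul hf (hasFDerivAt_integral_smul_comp_sub hρ hG x).differentiableAt]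
  refine h_add.congr fun z => ?_
  rw [vdiv_smul hf (hG_diff z), vdiv_comp_sub, map_smul, smul_eq_mul]
  ring

variable {ι : Type*} [Fintype ι] [DecidableEq ι]

theorem integratesTo_vdiv_update_zero {Φ : (ι → 𝔼) → 𝔼} {j : ι} (hΦ : Differentiable ℝ Φ)
    (hΦ_int : Integrable Φ)
    (hΦ'_int : ∀ v, Integrable fun x => fderiv ℝ Φ x (Pi.single j v)) :
    IntegratesTo (fun x => vdiv (fun y => Φ (Function.update x j y)) (x j)) 0 := by
  have h_entry (v : 𝔼) := (integratesTo_fderiv_apply_zero hΦ hΦ_int (hΦ'_int v)).clm_comp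
    ((innerSL ℝ).flip v)
  have h_sum := IntegratesTo.sum (s := Finset.univ) fun i _ =>
    h_entry (EuclideanSpace.single i 1)
  simpa only [vdiv, fderiv_comp_update (hΦ _), map_zero, Finset.sum_const_zero,
    ContinuousLinearMap.flip_apply, innerSL_apply_apply] using h_sum

theorem integratesTo_vdiv_update_prod_smul_zero {ρ : 𝔼 → ℝ} (hρ_diff : Differentiable ℝ ρ)
    (hρ : HasFiniteMoments ρ) (hρ' : HasFiniteMoments (fderiv ℝ ρ)) {F : (ι → 𝔼) → 𝔼}
    (hF : PolyBoundedC1 F) (j : ι) :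
    IntegratesTo (fun x : ι → 𝔼 => vdiv (fun y =>
      (∏ i, ρ (Function.update x j y i)) • F (Function.update x j y)) (x j)) 0 := by
  have hR_diff : Differentiable ℝ fun x : ι → 𝔼 => ∏ i, ρ (x i) := differentiable_pi_prod hρ_diff
  have hR : HasFiniteMoments fun x : ι → 𝔼 => ∏ i, ρ (x i) := .pi_prod fun _ => hρ
  have hF_meas := hF.contDiff.continuous.aestronglyMeasurable (μ := volume)
  refine integratesTo_vdiv_update_zero (Φ := fun x => (∏ i, ρ (x i)) • F x)
    (hR_diff.smul hF.differentiable) (hR.integrable_smul hF.polyBounded hF_meas) fun v => ?_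
  have h_product_rule (x : ι → 𝔼) :
      fderiv ℝ (fun x : ι → 𝔼 => (∏ i, ρ (x i)) • F x) x (Pi.single j v) =
        (∏ i, ρ (x i)) • fderiv ℝ F x (Pi.single j v) +
          ((∏ i ∈ Finset.univ.erase j, ρ (x i)) * fderiv ℝ ρ (x j) v) • F x := by
    rw [fderiv_fun_smul (hR_diff x) (hF.differentiable x), ← fderiv_pi_prod_single hρ_diff]
    rfl
  have hR' : HasFiniteMoments fun x : ι → 𝔼 =>
      (∏ i ∈ Finset.univ.erase j, ρ (x i)) * fderiv ℝ ρ (x j) v :=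
    hρ.prod_erase_mul (hρ'.clm_comp (.apply ℝ ℝ v)) j
  simp only [h_product_rule]
  exact ((hR.integrable_smul hF.polyBounded_fderiv
    hF.continuous_fderiv.aestronglyMeasurable).apply_continuousLinearMap _).add
    (hR'.integrable_smul hF.polyBounded hF_meas)

end Divergence

section Marginals

variable {d : ℕ} {ι : Type*} [Fintype ι]

local notation "𝔼" => EuclideanSpace ℝ (Fin d)

theorem integratesTo_lap_mul_prod {ρ : 𝔼 → ℝ} (h_mass : IntegratesTo ρ 1) (x₁ : 𝔼) :
    IntegratesTo (fun x : ι → 𝔼 => lap (fun y => ρ y * ∏ i, ρ (x i)) x₁) (lap ρ x₁) := by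
  have h_prod := IntegratesTo.pi_prod fun _ : ι => h_mass
  have h_lap := h_prod.const_mul (lap ρ x₁)
  rw [Finset.prod_const_one, mul_one] at h_lap
  refine h_lap.congr fun x => ?_
  simp only [mul_comm _ (∏ i, ρ (x i)), lap_const_mul]

theorem integratesTo_vdiv_mul_prod_smul {ρ : 𝔼 → ℝ} (h_mass : IntegratesTo ρ 1) (c : ℝ)
    (F : 𝔼 → 𝔼) (x₁ : 𝔼) :
    IntegratesTo (fun x : ι → 𝔼 => vdiv (fun y => (c * (ρ y * ∏ i, ρ (x i))) • F y) x₁)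
      (c * vdiv (fun y => ρ y • F y) x₁) := by
  have h_prod := IntegratesTo.pi_prod fun _ : ι => h_mass
  have h_vdiv := h_prod.const_mul (c * vdiv (fun y => ρ y • F y) x₁)
  rw [Finset.prod_const_one, mul_one] at h_vdiv
  refine h_vdiv.congr fun x => ?_
  rw [mul_right_comm, ← vdiv_const_smul]
  simp only [smul_smul, mul_right_comm c, mul_assoc]

theorem integratesTo_vdiv_interaction {ρ : 𝔼 → ℝ} (h_mass : IntegratesTo ρ 1)
    (hρ : HasFiniteMoments ρ) {G : 𝔼 → 𝔼} (hG : PolyBoundedC1 G) {x₁ : 𝔼}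
    (hρ_diff : DifferentiableAt ℝ ρ x₁) (b : ℝ) :
    IntegratesTo
      (fun x : ι → 𝔼 => vdiv (fun y => (b * (ρ y * ∏ i, ρ (x i))) • ∑ k, G (y - x k)) x₁)
      (b * Fintype.card ι * vdiv (fun y => ρ y • ∫ z, ρ z • G (y - z)) x₁) := by
  classical
  have h_sum := (IntegratesTo.sum (s := Finset.univ) fun k (_ : k ∈ Finset.univ) =>
    h_mass.prod_erase_mul (integratesTo_vdiv_smul_conv hρ hG hρ_diff) (k : ι)).const_mul b
  rw [Finset.sum_const, nsmul_eq_mul, ← mul_assoc, Finset.card_univ] at h_sum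
  refine h_sum.congr fun x => ?_
  have h_diff (k : ι) : DifferentiableAt ℝ (fun y => ρ y • G (y - x k)) x₁ :=
    hρ_diff.smul ((differentiableAt_comp_sub _).2 (hG.differentiable _))
  calc vdiv (fun y => (b * (ρ y * ∏ i, ρ (x i))) • ∑ k, G (y - x k)) x₁
      = vdiv (fun y => (b * ∏ i, ρ (x i)) • ∑ k, ρ y • G (y - x k)) x₁ := by
        simp only [← Finset.smul_sum, smul_smul, mul_comm, mul_left_comm]
    _ = (b * ∏ i, ρ (x i)) * ∑ k, vdiv (fun y => ρ y • G (y - x k)) x₁ := by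
        rw [vdiv_const_smul, vdiv_sum fun k _ => h_diff k]
    _ = b * ∑ k, (∏ i ∈ Finset.univ.erase k, ρ (x i)) *
          (ρ (x k) * vdiv (fun y => ρ y • G (y - x k)) x₁) := by
        simp only [← mul_assoc, Finset.prod_erase_mul _ _ (Finset.mem_univ _), Finset.mul_sum]

variable [DecidableEq ι]

theorem integratesTo_lap_update_prod_zero {ρ : 𝔼 → ℝ} (h_mass : IntegratesTo ρ 1)
    (h_lap : IntegratesTo (lap ρ) 0) (c : ℝ) (j : ι) :
    IntegratesTo
      (fun x : ι → 𝔼 => lap (fun y => c * ∏ i, ρ (Function.update x j y i)) (x j)) 0 := by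
  have h_slot := (h_mass.prod_erase_mul h_lap j).const_mul c
  rw [mul_zero] at h_slot
  refine h_slot.congr fun x => ?_
  simp only [prod_apply_update fun _ => ρ, lap_const_mul]

theorem integratesTo_vdiv_update_drift_zero {ρ : 𝔼 → ℝ} (hρ_diff : Differentiable ℝ ρ)
    (hρ : HasFiniteMoments ρ) (hρ' : HasFiniteMoments (fderiv ℝ ρ)) {H : 𝔼 → 𝔼}
    (hH : PolyBoundedC1 H) (c : ℝ) (j : ι) :
    IntegratesTo (fun x : ι → 𝔼 =>
      vdiv (fun y => (c * ∏ i, ρ (Function.update x j y i)) • H y) (x j)) 0 := by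
  have h_flux : PolyBoundedC1 fun x : ι → 𝔼 => c • H (x j) :=
    (hH.comp (.eval j)).const_smul c
  refine (integratesTo_vdiv_update_prod_smul_zero hρ_diff hρ hρ' h_flux j).congr fun x => ?_
  simp only [Function.update_self, smul_smul, mul_comm c]

theorem integratesTo_vdiv_update_interaction_zero {ρ : 𝔼 → ℝ} (hρ_diff : Differentiable ℝ ρ)
    (hρ : HasFiniteMoments ρ) (hρ' : HasFiniteMoments (fderiv ℝ ρ)) {G : 𝔼 → 𝔼}
    (hG : PolyBoundedC1 G) (c : ℝ) (x₁ : 𝔼) (j : ι) :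
    IntegratesTo (fun x : ι → 𝔼 => vdiv (fun y => (c * ∏ i, ρ (Function.update x j y i)) •
      (G (y - x₁) + ∑ k ∈ Finset.univ.erase j, G (y - x k))) (x j)) 0 := by
  have h_flux : PolyBoundedC1 fun x : ι → 𝔼 =>
      c • (G (x j - x₁) + ∑ k ∈ Finset.univ.erase j, G (x j - x k)) :=
    ((hG.comp (.sub (.eval j) (.const x₁))).add
      (.sum fun k _ => hG.comp (.sub (.eval j) (.eval k)))).const_smul c
  refine (integratesTo_vdiv_update_prod_smul_zero hρ_diff hρ hρ' h_flux j).congr fun x => ?_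
  have h_others (y : 𝔼) : ∑ k ∈ Finset.univ.erase j, G (y - Function.update x j y k) =
      ∑ k ∈ Finset.univ.erase j, G (y - x k) :=
    Finset.sum_congr rfl fun k hk => by rw [Function.update_of_ne (Finset.ne_of_mem_erase hk)]
  simp only [Function.update_self, smul_smul, mul_comm c, h_others]

end Marginals

/-- `H`, `G`, `b` and `ι` stand for `∇V`, `∇W`, `B / (N - 1)` and the particles other than the
first. -/
theorem liouville_marginalization_general {d : ℕ} {ι : Type*} [Fintype ι] [DecidableEq ι]
    (A b C : ℝ) {ρ : EuclideanSpace ℝ (Fin d) → ℝ} (hρ_smooth : ContDiff ℝ 2 ρ)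
    (hρ : HasFiniteMoments ρ) (hρ' : HasFiniteMoments (fderiv ℝ ρ))
    (hρ'' : Integrable (iteratedFDeriv ℝ 2 ρ)) (hρ_mass : ∫ y, ρ y = 1)
    {H G : EuclideanSpace ℝ (Fin d) → EuclideanSpace ℝ (Fin d)}
    (hH : PolyBoundedC1 H) (hG : PolyBoundedC1 G) (x₁ : EuclideanSpace ℝ (Fin d)) :
    IntegratesTo
      (fun x : ι → EuclideanSpace ℝ (Fin d) =>
        C * (lap (fun y => ρ y * ∏ i, ρ (x i)) x₁
              + ∑ j, lap (fun y => ρ x₁ * ∏ i, ρ (Function.update x j y i)) (x j))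
          + (vdiv (fun y => (A * (ρ y * ∏ i, ρ (x i))) • H y) x₁
              + ∑ j, vdiv (fun y =>
                  (A * (ρ x₁ * ∏ i, ρ (Function.update x j y i))) • H y) (x j))
          + (vdiv (fun y => (b * (ρ y * ∏ i, ρ (x i))) • ∑ k, G (y - x k)) x₁
              + ∑ j, vdiv (fun y => (b * (ρ x₁ * ∏ i, ρ (Function.update x j y i))) •
                  (G (y - x₁) + ∑ k ∈ Finset.univ.erase j, G (y - x k))) (x j)))
      (C * lap ρ x₁ + A * vdiv (fun y => ρ y • H y) x₁
        + b * Fintype.card ι * vdiv (fun y => ρ y • ∫ z, ρ z • G (y - z)) x₁) := by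
  have hρ_diff : Differentiable ℝ ρ := hρ_smooth.differentiable two_ne_zero
  have h_mass : IntegratesTo ρ 1 := ⟨hρ.integrable, hρ_mass⟩
  have h_lap : IntegratesTo (lap ρ) 0 := integratesTo_lap_zero hρ_smooth hρ'.integrable hρ''
  have h_diffusion := ((integratesTo_lap_mul_prod h_mass x₁).add <| .sum (s := Finset.univ)
    fun j _ => integratesTo_lap_update_prod_zero h_mass h_lap (ρ x₁) (j : ι)).const_mul C
  have h_drift := (integratesTo_vdiv_mul_prod_smul h_mass A H x₁).add <| .sum (s := Finset.univ)
    fun j _ => integratesTo_vdiv_update_drift_zero hρ_diff hρ hρ' hH (A * ρ x₁) (j : ι)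
  have h_interaction := (integratesTo_vdiv_interaction h_mass hρ hG (hρ_diff x₁) b).add <|
    .sum (s := Finset.univ) fun j _ =>
      integratesTo_vdiv_update_interaction_zero hρ_diff hρ hρ' hG (b * ρ x₁) x₁ (j : ι)
  simpa only [Finset.sum_const_zero, add_zero, mul_assoc] using
    (h_diffusion.add h_drift).add h_interaction

/-- The analytic core of Theorem 1: under the propagation-of-chaos
factorization `ρ^N(x₁,…,x_N) = Π_j ρ(x_j)`, integrating the right-hand side of the
`N`-particle Liouville equation
`C Δρ^N + Σ_j div_{x_j}(A ∇V(x_j) ρ^N) + Σ_j div_{x_j}((B/(N−1)) Σ_{k≠j} ∇W(x_j−x_k) ρ^N)`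
over the last `N−1` variables yields
`C Δρ(x₁) + A div(∇V ρ)(x₁) + B div(ρ (∇W ∗ ρ))(x₁)`.
Here `(ℝ^d)^N ≅ ℝ^d × (ℝ^d)^{N−1}` (first block `x₁`, remaining blocks
`x : Fin (N−1) → ℝ^d`), the Laplacian on `(ℝ^d)^N` is the sum of block Laplacians,
and `(∇W ∗ ρ)(x) = ∫ ∇W(x−z) ρ(z) dz`. -/
theorem liouville_marginalization
    (d N : ℕ) (hd : 1 ≤ d) (hN : 2 ≤ N)
    (A B C : ℝ) (hA : 0 < A) (hB : 0 < B) (hC : 0 < C)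
    (ρ : SchwartzMap (EuclideanSpace ℝ (Fin d)) ℝ)
    (hρ_mass : ∫ y, ρ y = 1)
    (V W : EuclideanSpace ℝ (Fin d) → ℝ)
    (hV : ContDiff ℝ 2 V) (hW : ContDiff ℝ 2 W)
    (hVgrowth : ∃ (K : ℝ) (m : ℕ), 0 < K ∧ ∀ (k : ℕ), 1 ≤ k → k ≤ 2 → ∀ x,
      ‖iteratedFDeriv ℝ k V x‖ ≤ K * (1 + ‖x‖) ^ m)
    (hWgrowth : ∃ (K : ℝ) (m : ℕ), 0 < K ∧ ∀ (k : ℕ), 1 ≤ k → k ≤ 2 → ∀ x,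
      ‖iteratedFDeriv ℝ k W x‖ ≤ K * (1 + ‖x‖) ^ m)
    (x₁ : EuclideanSpace ℝ (Fin d)) :
    ∫ x : Fin (N - 1) → EuclideanSpace ℝ (Fin d),
        (C * (lap (fun y => ρ y * ∏ i, ρ (x i)) x₁
              + ∑ j : Fin (N - 1),
                  lap (fun y => ρ x₁ * ∏ i, ρ (Function.update x j y i)) (x j))
          + (vdiv (fun y => (A * (ρ y * ∏ i, ρ (x i))) • gradient V y) x₁
              + ∑ j : Fin (N - 1),
                  vdiv (fun y =>
                    (A * (ρ x₁ * ∏ i, ρ (Function.update x j y i))) • gradient V y) (x j))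
          + (vdiv (fun y =>
                ((B / ((N : ℝ) - 1)) * (ρ y * ∏ i, ρ (x i))) •
                  ∑ k, gradient W (y - x k)) x₁
              + ∑ j : Fin (N - 1),
                  vdiv (fun y =>
                    ((B / ((N : ℝ) - 1)) * (ρ x₁ * ∏ i, ρ (Function.update x j y i))) •
                      (gradient W (y - x₁)
                        + ∑ k ∈ Finset.univ.erase j, gradient W (y - x k))) (x j)))
      = C * lap (fun y => ρ y) x₁
        + A * vdiv (fun y => ρ y • gradient V y) x₁
        + B * vdiv (fun y => ρ y • ∫ z, ρ z • gradient W (y - z)) x₁ := by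
  have hρ : HasFiniteMoments ρ := .of_schwartzMap ρ
  have hρ' : HasFiniteMoments (fderiv ℝ ρ) := .of_schwartzMap (SchwartzMap.fderivCLM ℝ _ ℝ ρ)
  obtain ⟨K, m, -, hV_bound⟩ := hVgrowth
  obtain ⟨L, n, -, hW_bound⟩ := hWgrowth
  have h_card : B / ((N : ℝ) - 1) * Fintype.card (Fin (N - 1)) = B := by
    have hN_cast : (1 : ℝ) < N := by exact_mod_cast hN
    rw [Fintype.card_fin, Nat.cast_pred (by lia), div_mul_cancel₀ _ (by linarith)]
  have h_general := liouville_marginalization_general (ι := Fin (N - 1)) A (B / ((N : ℝ) - 1)) C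
    (ρ.smooth 2)
    hρ hρ' (integrable_iteratedFDeriv_schwartzMap ρ 2) hρ_mass
    (.gradient hV hV_bound) (.gradient hW hW_bound) x₁
  rw [h_card] at h_general
  exact h_general.integral_eq
end

section
/- Let a ∈ ℝ, β > 0, τ > 0, let W'(y) = a y and ρ(x) = β exp(−τ x²), and define (W' ∗ ρ)(x) = ∫_{−∞}^{∞} a y · β exp(−τ (x − y)²) dy. Then ρ'(x) + (W' ∗ ρ)(x) ρ(x) = 0 for all x ∈ ℝ if and only if a β = 2 τ^{3/2} / √π. In particular, under this relation, ρ is a stationary state of the zero-food equation ρ_t = Δρ + ∂_x((W' ∗ ρ) ρ), i.e. ρ''(x) + ∂_x( (W' ∗ ρ)(x) ρ(x) ) = 0 for all x. -/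
/-!
The Gaussian is even, so its first moment vanishes and convolving it with `W'(y) = a y` gives
`a M x`, where `M = β √(π / τ)` is its mass. As `ρ' = -2 τ x ρ`, the flux is
`ρ' + (W' ∗ ρ) ρ = (a M - 2 τ) x ρ`, which vanishes identically exactly when `a M = 2 τ`.
The stationary equation is the derivative of the zero-flux equation.
-/

open MeasureTheory

section Moments

variable {G E : Type*} [MeasurableSpace G] [NormedAddCommGroup E] [NormedSpace ℝ E]

theorem integral_eq_zero_of_odd [AddGroup G] [MeasurableNeg G] {μ : Measure G}
    [μ.IsNegInvariant] {f : G → E} (hf : f.Odd) : ∫ y, f y ∂μ = 0 := by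
  have integral_eq_neg : ∫ y, f y ∂μ = -∫ y, f y ∂μ := by
    calc ∫ y, f y ∂μ = ∫ y, f (-y) ∂μ := (integral_neg_eq_self f μ).symm
      _ = -∫ y, f y ∂μ := by simp only [hf.eq, integral_neg]
  have : IsAddTorsionFree E := .of_isTorsionFree ℝ E
  exact self_eq_neg.mp integral_eq_neg

theorem integral_comp_sub_left_smul_of_even [CompleteSpace E] [MeasurableSpace E]
    [MeasurableAdd E] [MeasurableNeg E] {μ : Measure E} [μ.IsAddLeftInvariant]
    [μ.IsNegInvariant] {ρ : E → ℝ} (heven : ρ.Even) (hρ : Integrable ρ μ)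
    (hmoment : Integrable (fun y => ρ y • y) μ) (x : E) :
    ∫ y, ρ (x - y) • y ∂μ = (∫ y, ρ y ∂μ) • x := by
  have first_moment : ∫ y, ρ y • y ∂μ = 0 :=
    integral_eq_zero_of_odd fun y => by rw [heven.eq, smul_neg]
  calc ∫ y, ρ (x - y) • y ∂μ
      = ∫ y, ρ y • (x - y) ∂μ := by
        simpa only [sub_sub_cancel] using
          integral_sub_left_eq_self (fun y => ρ y • (x - y)) μ x
    _ = ∫ y, ρ y • x ∂μ - ∫ y, ρ y • y ∂μ := by
        simp only [smul_sub]
        exact integral_sub (hρ.smul_const x) hmoment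
    _ = (∫ y, ρ y ∂μ) • x := by
        rw [first_moment, sub_zero, integral_smul_const]

end Moments

/-- The flux `ρ' + (W' ∗ ρ) ρ` of the zero-food model, whose divergence is the right-hand side of
the evolution equation; the argument `dW` is the derivative `W'` of the interaction kernel. -/
noncomputable def zeroFoodFlux (dW ρ : ℝ → ℝ) (x : ℝ) : ℝ :=
  deriv ρ x + (∫ y, dW y * ρ (x - y)) * ρ x

theorem zeroFoodFlux_linear_of_even {ρ : ℝ → ℝ} (heven : ρ.Even) (hρ : Integrable ρ)
    (hmoment : Integrable fun y => ρ y * y) (a x : ℝ) :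
    zeroFoodFlux (fun y => a * y) ρ x = deriv ρ x + a * (∫ y, ρ y) * x * ρ x := by
  have convolution : ∫ y, a * y * ρ (x - y) = a * ((∫ y, ρ y) * x) := by
    simp only [mul_assoc, integral_const_mul]
    simpa only [smul_eq_mul, mul_comm (ρ _)] using
      congrArg (a * ·) (integral_comp_sub_left_smul_of_even heven hρ hmoment x)
  rw [zeroFoodFlux, convolution, ← mul_assoc a]

theorem deriv_deriv_add_deriv_eq_zero {𝕜 F : Type*} [NontriviallyNormedField 𝕜]
    [NormedAddCommGroup F] [NormedSpace 𝕜 F] {f g : 𝕜 → F} (h : ∀ x, deriv f x + g x = 0)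
    (x : 𝕜) : deriv (deriv f) x + deriv g x = 0 := by
  have deriv_eq_neg : deriv f = -g := funext fun y => eq_neg_of_add_eq_zero_left (h y)
  rw [deriv_eq_neg, deriv.neg, neg_add_cancel]

/-- The Gaussian profile of amplitude `β` and decay rate `τ`, the candidate stationary density. -/
noncomputable def gaussianProfile (β τ x : ℝ) : ℝ :=
  β * Real.exp (-τ * x ^ 2)

namespace gaussianProfile

theorem ne_zero {β : ℝ} (hβ : β ≠ 0) (τ x : ℝ) : gaussianProfile β τ x ≠ 0 :=
  mul_ne_zero hβ (Real.exp_ne_zero _)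

theorem even (β τ : ℝ) : (gaussianProfile β τ).Even := fun x => by
  simp only [gaussianProfile, neg_sq]

theorem integrable (β : ℝ) {τ : ℝ} (hτ : 0 < τ) : Integrable (gaussianProfile β τ) :=
  (integrable_exp_neg_mul_sq hτ).const_mul β

theorem integrable_mul_id (β : ℝ) {τ : ℝ} (hτ : 0 < τ) :
    Integrable fun x => gaussianProfile β τ x * x := by
  simpa only [gaussianProfile, mul_assoc, mul_comm (Real.exp _)] using
    (integrable_mul_exp_neg_mul_sq hτ).const_mul β

theorem integral_eq (β τ : ℝ) : ∫ x, gaussianProfile β τ x = β * √(Real.pi / τ) := by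
  simp only [gaussianProfile, integral_const_mul, integral_gaussian]

theorem hasDerivAt (β τ x : ℝ) :
    HasDerivAt (gaussianProfile β τ) (-2 * τ * x * gaussianProfile β τ x) x := by
  refine ((((hasDerivAt_pow 2 x).const_mul (-τ)).exp).const_mul β).congr_deriv ?_
  simp only [gaussianProfile, Nat.cast_ofNat, Nat.add_one_sub_one, pow_one]
  ring

theorem zeroFoodFlux_linear (a β : ℝ) {τ : ℝ} (hτ : 0 < τ) (x : ℝ) :
    zeroFoodFlux (fun y => a * y) (gaussianProfile β τ) x =
      (a * β * √(Real.pi / τ) - 2 * τ) * x * gaussianProfile β τ x := by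
  rw [zeroFoodFlux_linear_of_even (even β τ) (integrable β hτ) (integrable_mul_id β hτ),
    integral_eq, (hasDerivAt β τ x).deriv]
  ring

theorem forall_zeroFoodFlux_linear_eq_zero_iff (a : ℝ) {β τ : ℝ} (hβ : β ≠ 0) (hτ : 0 < τ) :
    (∀ x, zeroFoodFlux (fun y => a * y) (gaussianProfile β τ) x = 0) ↔
      a * β * √(Real.pi / τ) = 2 * τ := by
  simp only [zeroFoodFlux_linear a β hτ, mul_eq_zero, ne_zero hβ, or_false, sub_eq_zero]
  exact ⟨fun h => (h 1).resolve_right one_ne_zero, fun h _ => Or.inl h⟩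

end gaussianProfile

theorem mul_sqrt_pi_div_eq_two_mul_iff (c : ℝ) {τ : ℝ} (hτ : 0 < τ) :
    c * √(Real.pi / τ) = 2 * τ ↔ c = 2 * τ ^ ((3 : ℝ) / 2) / √Real.pi := by
  have rpow_three_halves : τ ^ ((3 : ℝ) / 2) = τ * √τ := by
    rw [Real.sqrt_eq_rpow, ← Real.rpow_one_add' hτ.le (by norm_num)]
    norm_num
  rw [rpow_three_halves, Real.sqrt_div Real.pi_pos.le, ← mul_div_assoc,
    div_eq_iff (Real.sqrt_pos.2 hτ).ne', eq_div_iff (Real.sqrt_pos.2 Real.pi_pos).ne', mul_assoc 2]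

/-- For the quadratic kernel `W'(y) = a y` and the Gaussian
`ρ(x) = β exp(−τ x²)`, with `(W' ∗ ρ)(x) = ∫ a y · β exp(−τ(x−y)²) dy`, one has
`ρ' + (W' ∗ ρ) ρ = 0` everywhere iff `a β = 2 τ^{3/2} / √π`; and under this relation
`ρ` is a stationary state of the zero-food equation, i.e.
`ρ'' + (((W' ∗ ρ) ρ))' = 0` everywhere. -/
theorem gaussian_stationary_state (a β τ : ℝ) (hβ : 0 < β) (hτ : 0 < τ) :
    ((∀ x : ℝ,
        deriv (fun z => β * Real.exp (-τ * z ^ 2)) x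
          + (∫ y : ℝ, (a * y) * (β * Real.exp (-τ * (x - y) ^ 2)))
              * (β * Real.exp (-τ * x ^ 2)) = 0)
      ↔ a * β = 2 * τ ^ ((3 : ℝ) / 2) / Real.sqrt Real.pi)
    ∧ (a * β = 2 * τ ^ ((3 : ℝ) / 2) / Real.sqrt Real.pi →
        ∀ x : ℝ,
          deriv (deriv (fun z => β * Real.exp (-τ * z ^ 2))) x
            + deriv (fun z =>
                (∫ y : ℝ, (a * y) * (β * Real.exp (-τ * (z - y) ^ 2)))
                  * (β * Real.exp (-τ * z ^ 2))) x = 0) := by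
  have flux_eq_zero_iff :
      (∀ x, zeroFoodFlux (fun y => a * y) (gaussianProfile β τ) x = 0) ↔
        a * β = 2 * τ ^ ((3 : ℝ) / 2) / √Real.pi :=
    (gaussianProfile.forall_zeroFoodFlux_linear_eq_zero_iff a hβ.ne' hτ).trans
      (mul_sqrt_pi_div_eq_two_mul_iff (a * β) hτ)
  exact ⟨flux_eq_zero_iff, fun h => deriv_deriv_add_deriv_eq_zero (flux_eq_zero_iff.2 h)⟩
end

section
/- Let τ > 0, c ∈ ℝ, and let f : ℝ → ℝ be continuous with at most polynomial growth, i.e. |f(y)| ≤ K(1 + |y|)^m for some K > 0 and m ∈ ℕ. If ∫_{−∞}^{∞} f(y) exp(−τ (y − x)²) dy = c x for all x ∈ ℝ, then f(y) = c √(τ/π) · y for all y ∈ ℝ. -/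
/-!
The kernel `exp (-τ (y - x)²)` is, up to the factor `√(τ / π)`, the density of the normal law
`N(x, 1 / (2τ))`, so the claim is that a function is determined by its means under all normal laws
of a fixed variance `v ≠ 0`. The law `N(v t, v)` is the exponential tilting of `N(0, v)` by
`y ↦ t y`; a function `f` whose means all vanish therefore has vanishing two-sided Laplace transform
with respect to `N(0, v)`. Thus `f⁺` and `f⁻` are densities of finite measures with the same moment
generating function. Such measures agree, because the generating function extends analytically to
the imaginary axis, where it is the characteristic function. Hence `f = 0` almost everywhere.
Finally, the mean of `N(x, v)` is `x`, so `y ↦ a y` is a function whose means are `a x`.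
-/

open MeasureTheory ProbabilityTheory Real
open scoped NNReal

section MomentGeneratingFunction

theorem measure_ext_of_mgf_id_eq {μ ν : Measure ℝ} [IsFiniteMeasure μ] [IsFiniteMeasure ν]
    (hμ : 0 ∈ interior (integrableExpSet id μ)) (h : mgf id μ = mgf id ν) : μ = ν := by
  have hzero : μ = 0 ↔ ν = 0 := by
    have huniv : μ.real Set.univ = ν.real Set.univ := by simpa [mgf_zero'] using congrFun h 0
    rw [← Measure.measure_univ_eq_zero, ← Measure.measure_univ_eq_zero,
      ← measureReal_eq_zero_iff, ← measureReal_eq_zero_iff, huniv]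
  refine Measure.ext_of_charFun (funext fun t ↦ ?_)
  rw [← complexMGF_id_mul_I, ← complexMGF_id_mul_I]
  exact eqOn_complexMGF_of_mgf' h hzero (by simpa using hμ)

variable {Ω : Type*} [MeasurableSpace Ω] {μ : Measure Ω} {u : Ω → ℝ}

theorem integrable_withDensity_ofReal_iff (hu : AEMeasurable u μ) (hu0 : 0 ≤ᵐ[μ] u) {X : Ω → ℝ} :
    Integrable X (μ.withDensity fun ω ↦ ENNReal.ofReal (u ω)) ↔
      Integrable (fun ω ↦ u ω * X ω) μ := by
  rw [integrable_withDensity_iff_integrable_smul₀' hu.ennreal_ofReal (by simp)]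
  refine integrable_congr ?_
  filter_upwards [hu0] with ω hω
  rw [ENNReal.toReal_ofReal hω, smul_eq_mul]

theorem mgf_withDensity_ofReal (hu : AEMeasurable u μ) (hu0 : 0 ≤ᵐ[μ] u) (X : Ω → ℝ) (t : ℝ) :
    mgf X (μ.withDensity fun ω ↦ ENNReal.ofReal (u ω)) t = ∫ ω, u ω * exp (t * X ω) ∂μ := by
  rw [mgf, integral_withDensity_eq_integral_toReal_smul₀ hu.ennreal_ofReal (by simp)]
  refine integral_congr_ae ?_
  filter_upwards [hu0] with ω hω
  rw [ENNReal.toReal_ofReal hω, smul_eq_mul]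

end MomentGeneratingFunction

section LaplaceTransform

variable {μ : Measure ℝ}

theorem ae_eq_of_forall_integral_mul_exp_eq_of_nonneg {u w : ℝ → ℝ}
    (hu0 : 0 ≤ᵐ[μ] u) (hw0 : 0 ≤ᵐ[μ] w)
    (hu : ∀ t, Integrable (fun y ↦ u y * exp (t * y)) μ) (hw : Integrable w μ)
    (h : ∀ t, ∫ y, u y * exp (t * y) ∂μ = ∫ y, w y * exp (t * y) ∂μ) : u =ᵐ[μ] w := by
  have hu_int : Integrable u μ := by simpa using hu 0
  have hu_meas := hu_int.aemeasurable
  have hw_meas := hw.aemeasurable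
  have := isFiniteMeasure_withDensity_ofReal hu_int.hasFiniteIntegral
  have := isFiniteMeasure_withDensity_ofReal hw.hasFiniteIntegral
  have hexp : integrableExpSet id (μ.withDensity fun y ↦ ENNReal.ofReal (u y)) = Set.univ :=
    Set.eq_univ_of_forall fun t ↦ (integrable_withDensity_ofReal_iff hu_meas hu0).2 (hu t)
  have hmeasure : μ.withDensity (fun y ↦ ENNReal.ofReal (u y)) =
      μ.withDensity fun y ↦ ENNReal.ofReal (w y) := by
    refine measure_ext_of_mgf_id_eq (by simp [hexp]) (funext fun t ↦ ?_)
    rw [mgf_withDensity_ofReal hu_meas hu0, mgf_withDensity_ofReal hw_meas hw0]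
    exact h t
  rw [withDensity_eq_iff hu_meas.ennreal_ofReal hw_meas.ennreal_ofReal
    hu_int.lintegral_lt_top.ne] at hmeasure
  filter_upwards [hmeasure, hu0, hw0] with y hy hu_nonneg hw_nonneg
  exact (ENNReal.ofReal_eq_ofReal_iff hu_nonneg hw_nonneg).1 hy

theorem ae_eq_zero_of_forall_integral_mul_exp_eq_zero {f : ℝ → ℝ}
    (hf : ∀ t, Integrable (fun y ↦ f y * exp (t * y)) μ)
    (h : ∀ t, ∫ y, f y * exp (t * y) ∂μ = 0) : f =ᵐ[μ] 0 := by
  have hpos (t : ℝ) : Integrable (fun y ↦ f⁺ y * exp (t * y)) μ := by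
    refine (hf t).pos_part.congr (.of_forall fun y ↦ ?_)
    simp [posPart_def, max_mul_of_nonneg _ _ (exp_pos (t * y)).le]
  have hneg (t : ℝ) : Integrable (fun y ↦ f⁻ y * exp (t * y)) μ := by
    refine (hf t).neg_part.congr (.of_forall fun y ↦ ?_)
    simp [negPart_def, max_mul_of_nonneg _ _ (exp_pos (t * y)).le]
  have hparts : f⁺ =ᵐ[μ] f⁻ := by
    refine ae_eq_of_forall_integral_mul_exp_eq_of_nonneg (.of_forall (posPart_nonneg f))
      (.of_forall (negPart_nonneg f)) hpos
      (by simpa only [zero_mul, exp_zero, mul_one] using hneg 0) fun t ↦ ?_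
    rw [← sub_eq_zero, ← integral_sub (hpos t) (hneg t), ← h t]
    congr with y
    rw [← sub_mul, ← Pi.sub_apply, posPart_sub_negPart]
  filter_upwards [hparts] with y hy
  rw [← posPart_sub_negPart f, Pi.sub_apply, hy, sub_self, Pi.zero_apply]

end LaplaceTransform

section Gaussian

theorem tilted_mul_gaussianReal (m t : ℝ) (v : ℝ≥0) :
    (gaussianReal m v).tilted (t * ·) = gaussianReal (m + v * t) v := by
  have hint := integrable_exp_mul_gaussianReal (μ := m) (v := v)
  have := isProbabilityMeasure_tilted (hint t)
  refine (measure_ext_of_mgf_id_eq ?_ (funext fun s ↦ ?_)).symm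
  · simp
  · have hmgf (n r : ℝ) : ∫ y, exp (r * y) ∂gaussianReal n v = exp (n * r + v * r ^ 2 / 2) :=
      congrFun mgf_id_gaussianReal r
    simp only [mgf, id, integral_exp_tilted, Pi.add_apply, ← add_mul, hmgf, ← exp_sub]
    ring_nf

/-- In statistical terms: the Gaussian location family of a fixed variance is complete. -/
theorem ae_eq_of_forall_integral_gaussianReal_eq {v : ℝ≥0} (hv : v ≠ 0) {f g : ℝ → ℝ}
    (hf : ∀ x, Integrable f (gaussianReal x v)) (hg : ∀ x, Integrable g (gaussianReal x v))
    (h : ∀ x, ∫ y, f y ∂gaussianReal x v = ∫ y, g y ∂gaussianReal x v) : f =ᵐ[volume] g := by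
  have htilt (t : ℝ) : (gaussianReal 0 v).tilted (t * ·) = gaussianReal (v * t) v := by
    rw [tilted_mul_gaussianReal, zero_add]
  have hint (t : ℝ) : Integrable (fun y ↦ (f - g) y * exp (t * y)) (gaussianReal 0 v) := by
    have hsub : Integrable (f - g) ((gaussianReal 0 v).tilted (t * ·)) := by
      rw [htilt]
      exact (hf _).sub (hg _)
    simpa only [smul_eq_mul, mul_comm] using
      (integrable_tilted_iff (integrable_exp_mul_gaussianReal t) _).1 hsub
  have hzero (t : ℝ) : ∫ y, (f - g) y * exp (t * y) ∂gaussianReal 0 v = 0 := by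
    have hmean : ∫ y, (f - g) y ∂(gaussianReal 0 v).tilted (t * ·) = 0 := by
      simp only [htilt, Pi.sub_apply, integral_sub (hf _) (hg _), h, sub_self]
    have hmass := (integral_exp_pos (integrable_exp_mul_gaussianReal (μ := 0) (v := v) t)).ne'
    simpa only [integral_tilted, smul_eq_mul, div_mul_eq_mul_div, integral_div, div_eq_zero_iff,
      hmass, or_false, mul_comm (exp _)] using hmean
  have hae := (gaussianReal_absolutelyContinuous' 0 hv).ae_le
    (ae_eq_zero_of_forall_integral_mul_exp_eq_zero hint hzero)
  filter_upwards [hae] with y hy using sub_eq_zero.1 hy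

variable {τ : ℝ}

theorem gaussianPDFReal_toNNReal_inv_two_mul (hτ : 0 < τ) (x y : ℝ) :
    gaussianPDFReal x (2 * τ)⁻¹.toNNReal y = √(τ / π) * exp (-τ * (y - x) ^ 2) := by
  rw [gaussianPDFReal, coe_toNNReal _ (by positivity), ← sqrt_inv]
  congr 2 <;> field_simp

theorem integral_gaussianReal_toNNReal_inv_two_mul (hτ : 0 < τ) (x : ℝ) (f : ℝ → ℝ) :
    ∫ y, f y ∂gaussianReal x (2 * τ)⁻¹.toNNReal =
      √(τ / π) * ∫ y, f y * exp (-τ * (y - x) ^ 2) := by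
  rw [integral_gaussianReal_eq_integral_smul (by simpa using hτ), ← integral_const_mul]
  congr with y
  rw [gaussianPDFReal_toNNReal_inv_two_mul hτ, smul_eq_mul]
  ring

theorem integrable_gaussianReal_toNNReal_inv_two_mul_iff (hτ : 0 < τ) {x : ℝ} {f : ℝ → ℝ} :
    Integrable f (gaussianReal x (2 * τ)⁻¹.toNNReal) ↔
      Integrable fun y ↦ f y * exp (-τ * (y - x) ^ 2) := by
  rw [gaussianReal_of_var_ne_zero _ (by simpa using hτ), gaussianPDF_def,
    integrable_withDensity_ofReal_iff (by fun_prop) (.of_forall (gaussianPDFReal_nonneg _ _)),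
    ← integrable_const_mul_iff (c := √(τ / π)) (isUnit_iff_ne_zero.2 (by positivity))
      fun y ↦ f y * exp (-τ * (y - x) ^ 2)]
  simp only [gaussianPDFReal_toNNReal_inv_two_mul hτ, mul_assoc, mul_comm (exp _)]

end Gaussian

theorem integrable_of_norm_le_mul_one_add_norm_pow {E F : Type*} [NormedAddCommGroup E]
    [MeasurableSpace E] [NormedAddCommGroup F] {μ : Measure E} [IsFiniteMeasure μ] {f : E → F}
    {K : ℝ} {m : ℕ} (hμ : MemLp id m μ) (hf : AEStronglyMeasurable f μ)
    (hgrowth : ∀ y, ‖f y‖ ≤ K * (1 + ‖y‖) ^ m) : Integrable f μ := by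
  have hbound : Integrable (fun y : E ↦ (1 + ‖y‖) ^ m) μ := by
    refine ((memLp_const (1 : ℝ)).add hμ.norm).integrable_norm_pow'.congr (.of_forall fun y ↦ ?_)
    simp [abs_of_nonneg (add_nonneg zero_le_one (norm_nonneg y))]
  exact (hbound.const_mul K).mono' hf (.of_forall hgrowth)

theorem gaussian_convolution_linear_general (τ c : ℝ) (hτ : 0 < τ)
    (f : ℝ → ℝ) (hf : Continuous f)
    (hint : ∀ x : ℝ, Integrable fun y : ℝ ↦ f y * exp (-τ * (y - x) ^ 2))
    (h : ∀ x : ℝ, ∫ y : ℝ, f y * exp (-τ * (y - x) ^ 2) = c * x) :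
    ∀ y : ℝ, f y = c * √(τ / π) * y := by
  have hvar : (2 * τ)⁻¹.toNNReal ≠ 0 := by simpa using hτ
  have hlinear (x : ℝ) :
      Integrable (fun y ↦ c * √(τ / π) * y) (gaussianReal x (2 * τ)⁻¹.toNNReal) :=
    ((memLp_id_gaussianReal 1).integrable le_rfl).const_mul _
  have hae : f =ᵐ[volume] fun y ↦ c * √(τ / π) * y := by
    refine ae_eq_of_forall_integral_gaussianReal_eq hvar
      (fun x ↦ (integrable_gaussianReal_toNNReal_inv_two_mul_iff hτ).2 (hint x)) hlinear
      fun x ↦ ?_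
    rw [integral_gaussianReal_toNNReal_inv_two_mul hτ, h, integral_const_mul,
      integral_id_gaussianReal]
    ring
  exact congrFun ((hf.ae_eq_iff_eq volume (by fun_prop)).1 hae)

/-- Gaussian convolution forces linearity: if `f` is continuous with
at most polynomial growth (`|f(y)| ≤ K(1+|y|)^m` for some `K > 0`, `m ∈ ℕ`) and
`∫ f(y) exp(−τ(y−x)²) dy = c x` for all `x`, then `f(y) = c √(τ/π) y` for all `y`. -/
theorem gaussian_convolution_linear (τ c : ℝ) (hτ : 0 < τ)
    (f : ℝ → ℝ) (hf : Continuous f)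
    (hgrowth : ∃ (K : ℝ) (m : ℕ), 0 < K ∧ ∀ y, |f y| ≤ K * (1 + |y|) ^ m)
    (h : ∀ x : ℝ, ∫ y : ℝ, f y * Real.exp (-τ * (y - x) ^ 2) = c * x) :
    ∀ y : ℝ, f y = c * Real.sqrt (τ / Real.pi) * y := by
  obtain ⟨K, m, -, hK⟩ := hgrowth
  exact gaussian_convolution_linear_general τ c hτ f hf (fun x ↦
    (integrable_gaussianReal_toNNReal_inv_two_mul_iff hτ).1
      (integrable_of_norm_le_mul_one_add_norm_pow (memLp_id_gaussianReal m)
        hf.aestronglyMeasurable hK)) h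
end
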